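/- Every essentially incomplete theory is f-uniformly essentially incomplete: if U is essentially incomplete, then for every k ∈ ℕ and all consistent c.e. extensions U_0, …, U_{k−1} of U in the same signature, there exists a single sentence that is independent of each of U_0, …, U_{k−1}. -/

import Mathlib

open FirstOrder FirstOrder.Language

namespace PourEl

/-! ## Recursion-theoretic notions -/

/-- The `i`-th computably enumerable subset of `ℕ` (the domain of the `i`-th
partial computable function). -/
def WSet (i : ℕ) : Set ℕ :=
  {n | ((Denumerable.ofNat Nat.Partrec.Code i).eval n).Dom}

/-- A set of natural numbers is computably enumerable. -/
def CE (A : Set ℕ) : Prop := ∃ i, A = WSet i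

/-- A set of natural numbers is computable. -/
def Comp (A : Set ℕ) : Prop := ComputablePred (· ∈ A)

/-- Disjoint sets `X`, `Y` are computably separable iff some computable set
contains `X` and is disjoint from `Y`. -/
def CompSeparable (X Y : Set ℕ) : Prop :=
  ∃ Z : Set ℕ, Comp Z ∧ X ⊆ Z ∧ Y ∩ Z = ∅

/-- Computable inseparability. -/
def CompInseparable (X Y : Set ℕ) : Prop := ¬ CompSeparable X Y

/-- `Z` and `W` weakly biseparate `X` and `Y`. -/
def WeaklyBiseparate {α : Type*} (Z W X Y : Set α) : Prop :=
  X ⊆ Z ∧ Y ⊆ W ∧ Z ∩ Y = ∅ ∧ W ∩ X = ∅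

/-- `Z` and `W` biseparate `X` and `Y`. -/
def Biseparate {α : Type*} (Z W X Y : Set α) : Prop :=
  WeaklyBiseparate Z W X Y ∧ Z ∩ W = ∅

/-! ## Logical notions -/

variable {L : FirstOrder.Language}

/-- Provability: `φ` is a first-order consequence of `U` (by Gödel completeness,
semantic consequence). -/
def Prv (U : L.Theory) (φ : L.Sentence) : Prop := U ⊨ᵇ φ

/-- `U_p`: the set of theorems of `U`. -/
def Thms (U : L.Theory) : Set L.Sentence := {φ | Prv U φ}

/-- `U_r`: the set of refutable sentences of `U`. -/
def Refut (U : L.Theory) : Set L.Sentence := {φ | Prv U ∼φ}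

/-- Consistency: `U ⊬ ⊥`. -/
def Consistent (U : L.Theory) : Prop := ¬ Prv U ⊥

/-- `φ` is independent of `U`: `U` proves neither `φ` nor `¬φ`. -/
def Independent (U : L.Theory) (φ : L.Sentence) : Prop := ¬ Prv U φ ∧ ¬ Prv U ∼φ

/-- `U` is incomplete: some sentence is independent of it. -/
def Incomplete (U : L.Theory) : Prop := ∃ φ, Independent U φ

/-- Mono-consequence: `U ⊢_m φ` iff `ψ ⊢ φ` for some `ψ ∈ U`. -/
def MPrv (U : L.Theory) (φ : L.Sentence) : Prop := ∃ ψ ∈ U, Prv {ψ} φ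

/-- `U_m`: the set of mono-theorems of `U`. -/
def MThms (U : L.Theory) : Set L.Sentence := {φ | MPrv U φ}

/-- `U_n`: the set of mono-refutable sentences of `U`. -/
def MRefut (U : L.Theory) : Set L.Sentence := {φ | MPrv U ∼φ}

/-- Mono-consistency: every member is consistent by itself. -/
def MonoConsistent (U : L.Theory) : Prop := ∀ ψ ∈ U, Consistent ({ψ} : L.Theory)

/-- `Û`: the set of all non-empty finite conjunctions of elements of `U`. -/
def hat (U : L.Theory) : L.Theory :=
  {φ | ∃ (ψ : L.Sentence) (l : List L.Sentence),
    ψ ∈ U ∧ (∀ χ ∈ l, χ ∈ U) ∧ φ = l.foldl (· ⊓ ·) ψ}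

/-- `U ⋓ V`. -/
def Cup (U V : L.Theory) : L.Theory :=
  {χ | ∃ φ ∈ U, ∃ ψ ∈ V, χ = φ ⊓ ψ}

/-- `U ⋐ V`: for every `φ ∈ U` and `ψ ∈ V` there is `ρ ∈ V` with `ρ ⊢ φ ∧ ψ`. -/
def Ssub (U V : L.Theory) : Prop :=
  ∀ φ ∈ U, ∀ ψ ∈ V, ∃ ρ ∈ V, Prv {ρ} (φ ⊓ ψ)

/-! ## Gödel numbering -/

/-- A Gödel numbering of the sentences of a (countable) signature: a bijective
coding of sentences by natural numbers that is effective for the basic syntactic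
operations, and for which the theorems of a c.e. theory can be effectively
enumerated from an index of the theory. -/
structure Numbering (L : FirstOrder.Language) where
  equiv : L.Sentence ≃ ℕ
  neg_comp : Computable fun n => equiv ∼(equiv.symm n)
  inf_comp : Computable₂ fun m n => equiv (equiv.symm m ⊓ equiv.symm n)
  imp_comp : Computable₂ fun m n => equiv (equiv.symm m ⟹ equiv.symm n)
  iff_comp : Computable₂ fun m n => equiv (equiv.symm m ⇔ equiv.symm n)
  thmIdx : ℕ → ℕ
  thmIdx_comp : Computable thmIdx
  thmIdx_spec : ∀ i, WSet (thmIdx i) = equiv '' Thms (equiv.symm '' WSet i)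

namespace Numbering

variable (g : Numbering L)

/-- The code of a sentence. -/
def code (φ : L.Sentence) : ℕ := g.equiv φ

/-- The set of codes of a set of sentences. -/
def codes (S : Set L.Sentence) : Set ℕ := g.equiv '' S

/-- The theory axiomatised by the `i`-th c.e. set (identified with a set of
sentences via the numbering). -/
def thy (i : ℕ) : L.Theory := g.equiv.symm '' WSet i

/-- The theory `U` is computably enumerable (with respect to the numbering). -/
def CEThy (U : L.Theory) : Prop := CE (g.codes U)

end Numbering


/-! ## Helper lemmas -/

universe u v

theorem prv_mono {S T : L.Theory} (h : S ⊆ T) {φ : L.Sentence} (hp : Prv S φ) : Prv T φ := by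
  refine Theory.models_sentence_iff.2 fun M => ?_
  have : M ⊨ S := Theory.Model.mono M.is_model h
  exact Theory.ModelsBoundedFormula.realize_sentence hp M

/-- Jointly inconsistent theories are separated by a single sentence. -/
theorem exists_sep {S T : L.Theory} (h : ¬ Consistent (S ∪ T)) :
    ∃ χ : L.Sentence, Prv S χ ∧ Prv T ∼χ := by
  classical
  have h' : Prv (S ∪ T) ⊥ := not_not.1 h
  obtain ⟨F, hF, hFb⟩ := Theory.models_iff_finset_models.1 h'
  let f : {x // x ∈ F.filter (· ∈ S)} → L.Sentence := fun x => x.1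
  refine ⟨BoundedFormula.iInf f, ?_, ?_⟩
  · refine Theory.models_sentence_iff.2 fun M => ?_
    refine BoundedFormula.realize_iInf.2 fun b => ?_
    exact Theory.realize_sentence_of_mem S (Finset.mem_filter.1 b.2).2
  · refine Theory.models_sentence_iff.2 fun M => ?_
    refine BoundedFormula.realize_not.2 fun hM => ?_
    have hM' := BoundedFormula.realize_iInf.1 hM
    have : M ⊨ (F : L.Theory) := by
      refine ⟨fun φ hφ => ?_⟩
      rcases hF hφ with hS | hT
      · exact hM' ⟨φ, Finset.mem_filter.2 ⟨hφ, hS⟩⟩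
      · exact Theory.realize_sentence_of_mem T hT
    exact Theory.ModelsBoundedFormula.realize_sentence hFb M

theorem ce_union {A B : Set ℕ} (hA : CE A) (hB : CE B) : CE (A ∪ B) := by
  obtain ⟨i, rfl⟩ := hA
  obtain ⟨j, rfl⟩ := hB
  obtain ⟨h, hh, H⟩ := Nat.Partrec.merge'
    (Nat.Partrec.Code.exists_code.2 ⟨Denumerable.ofNat Nat.Partrec.Code i, rfl⟩)
    (Nat.Partrec.Code.exists_code.2 ⟨Denumerable.ofNat Nat.Partrec.Code j, rfl⟩)
  obtain ⟨c, rfl⟩ := Nat.Partrec.Code.exists_code.1 hh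
  refine ⟨Encodable.encode c, ?_⟩
  ext n
  simp only [WSet, Set.mem_union, Set.mem_ofPred_eq, Denumerable.ofNat_encode]
  exact (H n).2.symm

theorem ceThy_union (g : Numbering L) {S T : L.Theory} (hS : g.CEThy S) (hT : g.CEThy T) :
    g.CEThy (S ∪ T) := by
  have := ce_union hS hT
  simpa only [Numbering.CEThy, Numbering.codes, Set.image_union] using this

/-- Insertion into a list of pairwise jointly inconsistent theories. -/
theorem exists_insert (P : L.Theory → Prop)
    (hP : ∀ S T, P S → P T → Consistent (S ∪ T) → P (S ∪ T)) (T : L.Theory) (hT : P T) :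
    ∀ l : List L.Theory, (∀ S ∈ l, P S) → l.Pairwise (fun S S' => ¬ Consistent (S ∪ S')) →
      ∃ l' : List L.Theory, (∀ S ∈ l', P S) ∧
        l'.Pairwise (fun S S' => ¬ Consistent (S ∪ S')) ∧
        (∀ S ∈ l', T ⊆ S ∨ ∃ R ∈ l, R ⊆ S) ∧ (∃ S ∈ l', T ⊆ S) ∧
        (∀ R ∈ l, ∃ S ∈ l', R ⊆ S) := by
  have mono : ∀ {A B C : L.Theory}, ¬ Consistent (A ∪ B) → B ⊆ C → ¬ Consistent (A ∪ C) :=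
    fun h hs hc => h fun hp => hc (prv_mono (Set.union_subset_union_right _ hs) hp)
  intro l
  induction l with
  | nil =>
    intro _ _
    exact ⟨[T], by simpa using hT, by simp, by simp, by simp, by simp⟩
  | cons S l ih =>
    intro hl hp
    rw [List.pairwise_cons] at hp
    have hS : P S := hl S (by simp)
    have hl' : ∀ S ∈ l, P S := fun R hR => hl R (List.mem_cons_of_mem _ hR)
    by_cases hc : Consistent (S ∪ T)
    · refine ⟨(S ∪ T) :: l, ?_, ?_, ?_, ⟨S ∪ T, by simp, Set.subset_union_right⟩, ?_⟩
      · intro R hR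
        rcases List.mem_cons.1 hR with rfl | hR
        · exact hP _ _ hS hT hc
        · exact hl' R hR
      · refine List.pairwise_cons.2 ⟨fun R hR => ?_, hp.2⟩
        have h1 := hp.1 R hR
        rw [Set.union_comm] at h1 ⊢
        exact mono h1 Set.subset_union_left
      · intro R hR
        rcases List.mem_cons.1 hR with rfl | hR
        · exact Or.inl Set.subset_union_right
        · exact Or.inr ⟨R, List.mem_cons_of_mem _ hR, subset_rfl⟩
      · intro R hR
        rcases List.mem_cons.1 hR with rfl | hR
        · exact ⟨_, List.mem_cons_self, Set.subset_union_left⟩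
        · exact ⟨R, List.mem_cons_of_mem _ hR, subset_rfl⟩
    · obtain ⟨l', h1, h2, h3, ⟨Q, hQ, hTQ⟩, h5⟩ := ih hl' hp.2
      refine ⟨S :: l', ?_, ?_, ?_, ⟨Q, List.mem_cons_of_mem _ hQ, hTQ⟩, ?_⟩
      · intro R hR
        rcases List.mem_cons.1 hR with rfl | hR
        · exact hS
        · exact h1 R hR
      · refine List.pairwise_cons.2 ⟨fun R hR => ?_, h2⟩
        rcases h3 R hR with h | ⟨R', hR', h⟩
        · exact mono hc h
        · exact mono (hp.1 R' hR') h
      · intro R hR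
        rcases List.mem_cons.1 hR with rfl | hR
        · exact Or.inr ⟨R, List.mem_cons_self, subset_rfl⟩
        · rcases h3 R hR with h | ⟨R', hR', h⟩
          · exact Or.inl h
          · exact Or.inr ⟨R', List.mem_cons_of_mem _ hR', h⟩
      · intro R hR
        rcases List.mem_cons.1 hR with rfl | hR
        · exact ⟨R, List.mem_cons_self, subset_rfl⟩
        · obtain ⟨Q', hQ', h⟩ := h5 R hR
          exact ⟨Q', List.mem_cons_of_mem _ hQ', h⟩

/-- A theory jointly inconsistent with each member of a list is separated from all of them by one
sentence. -/
theorem exists_sep_list (S : L.Theory) : ∀ l : List L.Theory,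
    (∀ R ∈ l, ¬ Consistent (S ∪ R)) →
      ∃ χ : L.Sentence, Prv S χ ∧ ∀ R ∈ l, Prv R ∼χ := by
  intro l
  induction l with
  | nil =>
    intro _
    refine ⟨∼⊥, ?_, by simp⟩
    exact Theory.models_sentence_iff.2 fun M => BoundedFormula.realize_not.2 fun h => h
  | cons R l ih =>
    intro h
    obtain ⟨χ, h1, h2⟩ := ih fun Q hQ => h Q (List.mem_cons_of_mem _ hQ)
    obtain ⟨ψ, h3, h4⟩ := exists_sep (h R List.mem_cons_self)
    refine ⟨χ ⊓ ψ, ?_, ?_⟩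
    · exact Theory.models_sentence_iff.2 fun M => BoundedFormula.realize_inf.2
        ⟨Theory.models_sentence_iff.1 h1 M, Theory.models_sentence_iff.1 h3 M⟩
    · intro Q hQ
      refine Theory.models_sentence_iff.2 fun M => BoundedFormula.realize_not.2 fun hM => ?_
      have hM' := BoundedFormula.realize_inf.1 hM
      rcases List.mem_cons.1 hQ with rfl | hQ
      · exact BoundedFormula.realize_not.1 (Theory.models_sentence_iff.1 h4 M) hM'.2
      · exact BoundedFormula.realize_not.1 (Theory.models_sentence_iff.1 (h2 Q hQ) M) hM'.1

/-- Independence only depends on a sentence up to provable equivalence. -/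
theorem independent_congr {L : FirstOrder.Language.{u, v}} {S : L.Theory} {φ ψ : L.Sentence}
    (h : ∀ M : Theory.ModelType.{u, v, max u v} S, M ⊨ φ ↔ M ⊨ ψ) (hi : Independent S φ) : Independent S ψ := by
  refine ⟨fun hp => hi.1 ?_, fun hp => hi.2 ?_⟩
  · exact Theory.models_sentence_iff.2 fun M => (h M).2 (Theory.models_sentence_iff.1 hp M)
  · exact Theory.models_sentence_iff.2 fun M => BoundedFormula.realize_not.2 fun hM =>
      BoundedFormula.realize_not.1 (Theory.models_sentence_iff.1 hp M) ((h M).1 hM)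

theorem exists_indep_of_pairwise : ∀ l : List L.Theory, (∀ S ∈ l, Incomplete S) →
    l.Pairwise (fun S S' => ¬ Consistent (S ∪ S')) →
      ∃ φ : L.Sentence, ∀ S ∈ l, Independent S φ := by
  intro l
  induction l with
  | nil => exact fun _ _ => ⟨⊥, by simp⟩
  | cons S l ih =>
    intro hl hp
    rw [List.pairwise_cons] at hp
    obtain ⟨φ, hφ⟩ := ih (fun R hR => hl R (List.mem_cons_of_mem _ hR)) hp.2
    obtain ⟨ψ, hψ⟩ := hl S List.mem_cons_self
    obtain ⟨χ, h1, h2⟩ := exists_sep_list S l hp.1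
    have key : ∀ (M : Type _) [L.Structure M], M ⊨ ((χ ⊓ ψ) ⊔ (∼χ ⊓ φ) : L.Sentence) ↔
        ((M ⊨ χ ∧ M ⊨ ψ) ∨ (¬ M ⊨ χ ∧ M ⊨ φ)) := by
      intro M _
      simp only [Sentence.Realize, Formula.Realize, BoundedFormula.realize_sup,
        BoundedFormula.realize_inf, BoundedFormula.realize_not]
    refine ⟨(χ ⊓ ψ) ⊔ (∼χ ⊓ φ), fun R hR => ?_⟩
    rcases List.mem_cons.1 hR with rfl | hR
    · refine independent_congr (fun M => ?_) hψ
      have hM : M ⊨ χ := Theory.models_sentence_iff.1 h1 M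
      rw [key]
      tauto
    · refine independent_congr (fun M => ?_) (hφ R hR)
      have hM : ¬ M ⊨ χ :=
        BoundedFormula.realize_not.1 (Theory.models_sentence_iff.1 (h2 R hR) M)
      rw [key]
      tauto

theorem exists_cover (P : L.Theory → Prop)
    (hP : ∀ S T, P S → P T → Consistent (S ∪ T) → P (S ∪ T)) :
    ∀ l : List L.Theory, (∀ S ∈ l, P S) →
      ∃ l' : List L.Theory, (∀ S ∈ l', P S) ∧
        l'.Pairwise (fun S S' => ¬ Consistent (S ∪ S')) ∧ (∀ R ∈ l, ∃ S ∈ l', R ⊆ S) := by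
  intro l
  induction l with
  | nil => exact fun _ => ⟨[], by simp, by simp, by simp⟩
  | cons T l ih =>
    intro hl
    obtain ⟨l₁, h1, h2, h3⟩ := ih fun R hR => hl R (List.mem_cons_of_mem _ hR)
    obtain ⟨l₂, k1, k2, -, k4, k5⟩ :=
      exists_insert P hP T (hl T List.mem_cons_self) l₁ h1 h2
    refine ⟨l₂, k1, k2, fun R hR => ?_⟩
    rcases List.mem_cons.1 hR with rfl | hR
    · exact k4
    · obtain ⟨S, hS, hRS⟩ := h3 R hR
      obtain ⟨Q, hQ, hSQ⟩ := k5 S hS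
      exact ⟨Q, hQ, hRS.trans hSQ⟩

/-- Every essentially incomplete theory is f-uniformly
essentially incomplete: given finitely many consistent c.e. extensions
`T 0, …, T (k-1)` of `U` in the same signature, some single sentence is
independent of all of them. -/
theorem statement4 {L : FirstOrder.Language} (g : Numbering L) (U : L.Theory)
    (hEI : ∀ V : L.Theory, g.CEThy V → Consistent V → Thms U ⊆ Thms V → Incomplete V)
    (k : ℕ) (T : Fin k → L.Theory)
    (hT : ∀ m, g.CEThy (T m) ∧ Consistent (T m) ∧ Thms U ⊆ Thms (T m)) :
    ∃ φ : L.Sentence, ∀ m, Independent (T m) φ := by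
  obtain ⟨l, h1, h2, h3⟩ := exists_cover
    (fun V => g.CEThy V ∧ Consistent V ∧ Thms U ⊆ Thms V)
    (fun S T hS hT hc => ⟨ceThy_union g hS.1 hT.1, hc,
      fun φ hφ => prv_mono Set.subset_union_left (hS.2.2 hφ)⟩)
    (List.ofFn T) (fun S hS => by
      obtain ⟨m, rfl⟩ := (List.mem_ofFn' _ _).1 hS
      exact hT m)
  obtain ⟨φ, hφ⟩ := exists_indep_of_pairwise l
    (fun S hS => hEI S (h1 S hS).1 (h1 S hS).2.1 (h1 S hS).2.2) h2
  refine ⟨φ, fun m => ?_⟩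
  obtain ⟨S, hS, hTS⟩ := h3 (T m) ((List.mem_ofFn' _ _).2 ⟨m, rfl⟩)
  exact ⟨fun hp => (hφ S hS).1 (prv_mono hTS hp), fun hp => (hφ S hS).2 (prv_mono hTS hp)⟩

end PourEl
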